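/- arXiv:2510.04343 — 2 statements merged into one kernel-verified Lean document; each statement's English description precedes it below -/
import Mathlib

section
/- Let μ > 0 and 0 < d < 2μ. Then liminf_{m→∞} sup_{p ≥ 0} inf_{P^m ∈ P(μ,d)^m} BUND(p,P^m)/OPT(m,P^m) ≥ 1 − d/(2μ). -/
/-!
Bundling at a price slightly below `m (μ - d/2)` achieves the bound.

Since `min x μ = (x + μ - |x - μ|) / 2`, every `P ∈ MeanMAD μ d` has truncated mean
`∫ min x μ dP = μ - d/2` (`MeanMAD.integral_min`). The truncated valuations are independent and
take values in `[0, μ]`, so each has variance at most `(μ/2)²`, and Chebyshev's inequality gives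
`P^m (∑ Xᵢ ≥ m (μ - d/2 - δ)) ≥ 1 - (μ/2)² / (m δ²)` uniformly over the ambiguity set
(`sale_prob_ge`). By individual rationality `OPT ≤ m μ` (`OPT_le`). Hence the ratio at price
`m (μ - d/2 - δ)` is at least `(μ - d/2 - δ)/μ * (1 - (μ/2)² / (m δ²))`; letting `m → ∞` and
then `δ → 0` gives the claim.

The suprema and infima are taken in `ℝ`, so the argument also needs that they are not degenerate:
the ambiguity set is nonempty (`MeanMAD.nonempty`), `OPT` is positive and dominates `BUND`
(`BUND_le_OPT`), and all ratios at a fixed price have infimum at most `1` (`sInf_ratio_le_one`).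
-/

open MeasureTheory Filter Set
open scoped ENNReal

noncomputable section

/-- The mean-MAD ambiguity set: Borel probability measures on `[0,∞)` (modeled as
probability measures on `ℝ` giving zero mass to `(-∞,0)`) with mean `μ` and
mean absolute deviation `d`. -/
def MeanMAD (μ d : ℝ) : Set (ProbabilityMeasure ℝ) :=
  {P | (P : Measure ℝ) (Set.Iio 0) = 0 ∧
       Integrable (fun x => x) (P : Measure ℝ) ∧
       (∫ x, x ∂(P : Measure ℝ)) = μ ∧
       (∫ x, |x - μ| ∂(P : Measure ℝ)) = d}

/-- A probability measure whose support consists of exactly two points. -/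
def IsTwoPoint (P : ProbabilityMeasure ℝ) : Prop :=
  ∃ x y : ℝ, x ≠ y ∧ (P : Measure ℝ) ({x, y} : Set ℝ)ᶜ = 0 ∧
    (P : Measure ℝ) {x} ≠ 0 ∧ (P : Measure ℝ) {y} ≠ 0

/-- The subset of the mean-MAD ambiguity set consisting of two-point distributions. -/
def MeanMAD2 (μ d : ℝ) : Set (ProbabilityMeasure ℝ) :=
  {P ∈ MeanMAD μ d | IsTwoPoint P}

/-- A deterministic mechanism for selling `m` goods: a measurable allocation rule with
values in `{0,1}^m` and a measurable nonnegative payment rule. -/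
structure Mech (m : ℕ) where
  alloc : (Fin m → ℝ) → (Fin m → ℝ)
  price : (Fin m → ℝ) → ℝ
  alloc_meas : Measurable alloc
  price_meas : Measurable price
  alloc01 : ∀ v i, alloc v i = 0 ∨ alloc v i = 1
  price_nonneg : ∀ v, 0 ≤ price v

/-- Truthfulness: incentive compatibility and individual rationality on `[0,∞)^m`. -/
def Truthful {m : ℕ} (D : Mech m) : Prop :=
  (∀ v w : Fin m → ℝ, (∀ i, 0 ≤ v i) → (∀ i, 0 ≤ w i) →
    (∑ i, D.alloc w i * v i) - D.price w ≤ (∑ i, D.alloc v i * v i) - D.price v) ∧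
  (∀ v : Fin m → ℝ, (∀ i, 0 ≤ v i) → 0 ≤ (∑ i, D.alloc v i * v i) - D.price v)

/-- Expected revenue of a mechanism under a joint distribution of valuations. -/
def REV {m : ℕ} (D : Mech m) (Pm : Measure (Fin m → ℝ)) : ℝ :=
  ∫ v, D.price v ∂Pm

/-- Revenue of the bundling mechanism with price `p`. -/
def BUND {m : ℕ} (p : ℝ) (Pm : Measure (Fin m → ℝ)) : ℝ :=
  p * (Pm {v | p ≤ ∑ i, v i}).toReal

/-- Optimal deterministic revenue for a known joint distribution. -/
def OPT (m : ℕ) (Pm : Measure (Fin m → ℝ)) : ℝ :=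
  sSup {r | ∃ D : Mech m, Truthful D ∧ r = REV D Pm}

/-- The joint (product) measure of a family of independent marginals. -/
def jointMeasure {m : ℕ} (P : Fin m → ProbabilityMeasure ℝ) : Measure (Fin m → ℝ) :=
  Measure.pi (fun i => (P i : Measure ℝ))

/-- Maximin value over deterministic truthful mechanisms. -/
def maximinVal (A : Set (ProbabilityMeasure ℝ)) (m : ℕ) : ℝ :=
  sSup {r | ∃ D : Mech m, Truthful D ∧
    r = sInf {s | ∃ P : Fin m → ProbabilityMeasure ℝ, (∀ i, P i ∈ A) ∧
      s = REV D (jointMeasure P) / m}}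

/-- Minimax value over deterministic truthful mechanisms. -/
def minimaxVal (A : Set (ProbabilityMeasure ℝ)) (m : ℕ) : ℝ :=
  sInf {r | ∃ P : Fin m → ProbabilityMeasure ℝ, (∀ i, P i ∈ A) ∧
    r = sSup {s | ∃ D : Mech m, Truthful D ∧ s = REV D (jointMeasure P) / m}}

/-- Maximin value of the ratio objective for the bundling mechanism. -/
def ratioVal (A : Set (ProbabilityMeasure ℝ)) (m : ℕ) : ℝ :=
  sSup {r | ∃ p : ℝ, 0 ≤ p ∧
    r = sInf {s | ∃ P : Fin m → ProbabilityMeasure ℝ, (∀ i, P i ∈ A) ∧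
      s = BUND p (jointMeasure P) / OPT m (jointMeasure P)}}

open ProbabilityTheory

/-! ### The ambiguity set -/

lemma MeanMAD.ae_nonneg {μ d : ℝ} {P : ProbabilityMeasure ℝ} (hP : P ∈ MeanMAD μ d) :
    ∀ᵐ x ∂(P : Measure ℝ), 0 ≤ x := by
  have h := hP.1
  rw [ae_iff]
  convert h using 2
  ext x
  simp

lemma MeanMAD.integral_min {μ d : ℝ} {P : ProbabilityMeasure ℝ} (hP : P ∈ MeanMAD μ d) :
    ∫ x, min x μ ∂(P : Measure ℝ) = μ - d / 2 := by
  obtain ⟨-, hint, hmean, hmad⟩ := hP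
  have h : ∀ x : ℝ, min x μ = (x + μ - |x - μ|) / 2 := by
    intro x
    rcases le_total x μ with h | h
    · rw [min_eq_left h, abs_of_nonpos (by linarith)]; ring
    · rw [min_eq_right h, abs_of_nonneg (by linarith)]; ring
  simp_rw [h]
  have h1 : Integrable (fun x : ℝ => x + μ) (P : Measure ℝ) := hint.add (integrable_const μ)
  have h2 : Integrable (fun x : ℝ => |x - μ|) (P : Measure ℝ) :=
    (hint.sub (integrable_const μ)).abs
  rw [integral_div, integral_sub h1 h2, integral_add hint (integrable_const μ), hmean, hmad]
  simp
  ring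

/-- The witness puts mass `d/(2μ)` at `0` and the remaining mass at the point that makes the mean
equal to `μ`. -/
lemma MeanMAD.nonempty {μ d : ℝ} (hμ : 0 < μ) (hd0 : 0 < d) (hd : d < 2 * μ) :
    (MeanMAD μ d).Nonempty := by
  set q : ℝ := d / (2 * μ) with hq
  have hq0 : 0 < q := by positivity
  have hq1 : q < 1 := by rw [hq, div_lt_one (by positivity)]; exact hd
  have hdq : d = 2 * μ * q := by rw [hq]; field_simp
  set y : ℝ := μ / (1 - q) with hy
  have h1q : 0 < 1 - q := by linarith
  have hy0 : 0 < y := by positivity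
  have hyq : (1 - q) * y = μ := by rw [hy]; field_simp
  have hyμ : μ ≤ y := by nlinarith
  let M : Measure ℝ := ENNReal.ofReal q • Measure.dirac 0 + ENNReal.ofReal (1 - q) • Measure.dirac y
  have hM : IsProbabilityMeasure M := by
    constructor
    simp only [M, Measure.add_apply, Measure.smul_apply, measure_univ, smul_eq_mul, mul_one]
    rw [← ENNReal.ofReal_add hq0.le h1q.le]
    simp
  have hint : ∀ f : ℝ → ℝ, Integrable f (ENNReal.ofReal q • Measure.dirac (0 : ℝ)) ∧
      Integrable f (ENNReal.ofReal (1 - q) • Measure.dirac y) := by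
    intro f
    exact ⟨(integrable_dirac (by simp)).smul_measure ENNReal.ofReal_ne_top,
      (integrable_dirac (by simp)).smul_measure ENNReal.ofReal_ne_top⟩
  have hval : ∀ f : ℝ → ℝ, ∫ x, f x ∂M = q * f 0 + (1 - q) * f y := by
    intro f
    simp only [M]
    rw [integral_add_measure (hint f).1 (hint f).2, integral_smul_measure, integral_smul_measure,
      integral_dirac, integral_dirac, ENNReal.toReal_ofReal hq0.le, ENNReal.toReal_ofReal h1q.le]
    simp
  refine ⟨⟨M, hM⟩, ?_, ?_, ?_, ?_⟩
  · simp only [ProbabilityMeasure.coe_mk, M, Measure.add_apply, Measure.smul_apply]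
    rw [Measure.dirac_apply' _ measurableSet_Iio, Measure.dirac_apply' _ measurableSet_Iio]
    simp [hy0.le]
  · exact (hint _).1.add_measure (hint _).2
  · simp only [ProbabilityMeasure.coe_mk]
    rw [hval]
    linarith
  · simp only [ProbabilityMeasure.coe_mk]
    rw [hval, abs_of_nonpos (by linarith), abs_of_nonneg (by linarith)]
    linarith

/-! ### Optimal and bundling revenue -/

instance {m : ℕ} (P : Fin m → ProbabilityMeasure ℝ) : IsProbabilityMeasure (jointMeasure P) := by
  unfold jointMeasure; infer_instance

lemma joint_ae_nonneg {μ d : ℝ} {m : ℕ} {P : Fin m → ProbabilityMeasure ℝ}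
    (hP : ∀ i, P i ∈ MeanMAD μ d) : ∀ᵐ v ∂(jointMeasure P), ∀ i, 0 ≤ v i := by
  rw [ae_all_iff]
  intro i
  exact (measurePreserving_eval (fun i => (P i : Measure ℝ)) i).quasiMeasurePreserving.ae
    (MeanMAD.ae_nonneg (hP i))

lemma REV_le {μ d : ℝ} {m : ℕ} {P : Fin m → ProbabilityMeasure ℝ}
    (hP : ∀ i, P i ∈ MeanMAD μ d) {D : Mech m} (hD : Truthful D) :
    REV D (jointMeasure P) ≤ m * μ := by
  have hi : ∀ i ∈ Finset.univ, Integrable (fun v : Fin m → ℝ => v i) (jointMeasure P) :=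
    fun i _ => (measurePreserving_eval (fun i => (P i : Measure ℝ)) i).integrable_comp_of_integrable
      (hP i).2.1
  have hval : ∫ v, ∑ i, v i ∂(jointMeasure P) = m * μ := by
    rw [integral_finsetSum _ hi]
    have : ∀ i, ∫ v, v i ∂(jointMeasure P) = μ := fun i => by
      have := integral_comp_eval (μ := fun i => (P i : Measure ℝ)) (i := i) (f := fun x : ℝ => x)
        measurable_id.aestronglyMeasurable
      rw [← (hP i).2.2.1, ← this]
      rfl
    simp [this]
  rw [← hval]
  refine integral_mono_of_nonneg (ae_of_all _ D.price_nonneg) (integrable_finsetSum _ hi) ?_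
  filter_upwards [joint_ae_nonneg hP] with v hv
  refine (sub_nonneg.1 (hD.2 v hv)).trans (Finset.sum_le_sum fun i _ => ?_)
  rcases D.alloc01 v i with h | h <;> simp [h, hv i]

lemma OPT_bddAbove {μ d : ℝ} {m : ℕ} {P : Fin m → ProbabilityMeasure ℝ}
    (hP : ∀ i, P i ∈ MeanMAD μ d) :
    BddAbove {r | ∃ D : Mech m, Truthful D ∧ r = REV D (jointMeasure P)} :=
  ⟨m * μ, by rintro _ ⟨D, hD, rfl⟩; exact REV_le hP hD⟩

lemma measurableSet_sale {m : ℕ} (p : ℝ) : MeasurableSet {v : Fin m → ℝ | p ≤ ∑ i, v i} :=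
  measurableSet_le measurable_const (by fun_prop)

open Classical in
/-- The mechanism offering the grand bundle at price `p`. -/
def bundleMech (m : ℕ) (p : ℝ) (hp : 0 ≤ p) : Mech m where
  alloc v := if p ≤ ∑ i, v i then fun _ => 1 else fun _ => 0
  price v := if p ≤ ∑ i, v i then p else 0
  alloc_meas := Measurable.ite (measurableSet_sale p) measurable_const measurable_const
  price_meas := Measurable.ite (measurableSet_sale p) measurable_const measurable_const
  alloc01 v i := by split_ifs <;> simp
  price_nonneg v := by split_ifs <;> simp [hp]

lemma bundleMech_truthful (m : ℕ) (p : ℝ) (hp : 0 ≤ p) : Truthful (bundleMech m p hp) := by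
  constructor
  · intro v w _ _
    simp only [bundleMech]
    split_ifs <;> simp <;> linarith
  · intro v _
    simp only [bundleMech]
    split_ifs <;> simp <;> linarith

lemma bundleMech_REV (m : ℕ) (p : ℝ) (hp : 0 ≤ p) (Q : Measure (Fin m → ℝ)) :
    REV (bundleMech m p hp) Q = BUND p Q := by
  classical
  have : (bundleMech m p hp).price = {v : Fin m → ℝ | p ≤ ∑ i, v i}.indicator fun _ => p := by
    ext v
    simp [bundleMech, Set.indicator_apply]
  rw [REV, this, integral_indicator (measurableSet_sale p), BUND]
  simp [Measure.real, mul_comm]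

lemma BUND_le_OPT {μ d : ℝ} {m : ℕ} {P : Fin m → ProbabilityMeasure ℝ}
    (hP : ∀ i, P i ∈ MeanMAD μ d) {p : ℝ} (hp : 0 ≤ p) :
    BUND p (jointMeasure P) ≤ OPT m (jointMeasure P) :=
  le_csSup (OPT_bddAbove hP) ⟨bundleMech m p hp, bundleMech_truthful m p hp,
    (bundleMech_REV m p hp _).symm⟩

lemma OPT_le {μ d : ℝ} {m : ℕ} {P : Fin m → ProbabilityMeasure ℝ}
    (hP : ∀ i, P i ∈ MeanMAD μ d) : OPT m (jointMeasure P) ≤ m * μ := by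
  refine csSup_le ⟨_, bundleMech m 0 le_rfl, bundleMech_truthful m 0 le_rfl, rfl⟩ ?_
  rintro _ ⟨D, hD, rfl⟩
  exact REV_le hP hD

lemma BUND_nonneg {m : ℕ} {p : ℝ} (hp : 0 ≤ p) (Q : Measure (Fin m → ℝ)) : 0 ≤ BUND p Q :=
  mul_nonneg hp ENNReal.toReal_nonneg

/-! ### Concentration of the truncated sum -/

/-- Chebyshev's inequality for `∑ min Xᵢ μ`, which lies below `∑ Xᵢ`. -/
lemma sale_prob_ge {μ d δ : ℝ} (hμ : 0 < μ) (hδ : 0 < δ) {m : ℕ} (hm : 0 < m)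
    {P : Fin m → ProbabilityMeasure ℝ} (hP : ∀ i, P i ∈ MeanMAD μ d) :
    1 - (μ / 2) ^ 2 / (m * δ ^ 2) ≤
      ((jointMeasure P) {v | m * (μ - d / 2 - δ) ≤ ∑ i, v i}).toReal := by
  have hm' : (0 : ℝ) < m := by exact_mod_cast hm
  let Y : Fin m → (Fin m → ℝ) → ℝ := fun i v => min (v i) μ
  have hYm : ∀ i, Measurable (Y i) := fun i => (measurable_pi_apply i).min measurable_const
  have hYb : ∀ i, ∀ᵐ v ∂(jointMeasure P), Y i v ∈ Set.Icc 0 μ := by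
    intro i
    filter_upwards [joint_ae_nonneg hP] with v hv
    exact ⟨le_min (hv i) hμ.le, min_le_right _ _⟩
  have hL2 : ∀ i, MemLp (Y i) 2 (jointMeasure P) := fun i =>
    memLp_of_bounded (hYb i) (hYm i).aestronglyMeasurable 2
  have hvar : ∀ i, variance (Y i) (jointMeasure P) ≤ (μ / 2) ^ 2 := fun i => by
    simpa using variance_le_sq_of_bounded (hYb i) (hYm i).aemeasurable
  have hmean : ∀ i, ∫ v, Y i v ∂(jointMeasure P) = μ - d / 2 := fun i => by
    rw [← MeanMAD.integral_min (hP i)]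
    exact integral_comp_eval (μ := fun i => (P i : Measure ℝ)) (i := i)
      (f := fun x : ℝ => min x μ) (measurable_id.min measurable_const).aestronglyMeasurable
  have hind : iIndepFun Y (jointMeasure P) :=
    iIndepFun_pi (μ := fun i => (P i : Measure ℝ)) (X := fun _ x => min x μ)
      fun i => (measurable_id.min measurable_const).aemeasurable
  have hSvar : variance (∑ i, Y i) (jointMeasure P) ≤ m * (μ / 2) ^ 2 := by
    rw [IndepFun.variance_sum (fun i _ => hL2 i) fun i _ j _ hij => hind.indepFun hij]
    refine (Finset.sum_le_sum fun i _ => hvar i).trans ?_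
    simp
  have hSmean : ∫ v, (∑ i, Y i) v ∂(jointMeasure P) = m * (μ - d / 2) := by
    simp only [Finset.sum_apply]
    rw [integral_finsetSum _ fun i _ => (hL2 i).integrable (by norm_num)]
    simp [hmean]
    ring
  have hcheb := meas_ge_le_variance_div_sq (μ := jointMeasure P) (X := ∑ i, Y i)
    (memLp_finsetSum' _ fun i _ => hL2 i) (c := m * δ) (by positivity)
  rw [hSmean] at hcheb
  have hsub : {v : Fin m → ℝ | m * (μ - d / 2 - δ) ≤ ∑ i, v i}ᶜ ⊆
      {v | m * δ ≤ |(∑ i, Y i) v - m * (μ - d / 2)|} := by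
    intro v hv
    simp only [mem_compl_iff, mem_ofPred_eq, not_le] at hv ⊢
    have h1 : (∑ i, Y i) v ≤ ∑ i, v i := by
      rw [Finset.sum_apply]
      exact Finset.sum_le_sum fun i _ => min_le_left _ _
    refine le_trans ?_ (neg_le_abs _)
    linarith
  have hcompl : (jointMeasure P).real {v : Fin m → ℝ | m * (μ - d / 2 - δ) ≤ ∑ i, v i}ᶜ ≤
      (μ / 2) ^ 2 / (m * δ ^ 2) := by
    refine (ENNReal.toReal_le_of_le_ofReal (div_nonneg (variance_nonneg _ _) (by positivity))
      ((measure_mono hsub).trans hcheb)).trans ?_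
    rw [div_le_div_iff₀ (by positivity) (by positivity)]
    calc _ ≤ (m * (μ / 2) ^ 2) * (m * δ ^ 2) := by gcongr
      _ = _ := by ring
  rw [probReal_compl_eq_one_sub (measurableSet_sale _)] at hcompl
  change _ ≤ (jointMeasure P).real _
  linarith

/-! ### The ratio -/

lemma sInf_ratio_le_one {μ d : ℝ} (hne : (MeanMAD μ d).Nonempty) (m : ℕ) {p : ℝ} (hp : 0 ≤ p) :
    sInf {s | ∃ P : Fin m → ProbabilityMeasure ℝ, (∀ i, P i ∈ MeanMAD μ d) ∧
      s = BUND p (jointMeasure P) / OPT m (jointMeasure P)} ≤ 1 := by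
  obtain ⟨P, hP⟩ := hne
  have hP' : ∀ i : Fin m, (fun _ => P) i ∈ MeanMAD μ d := fun _ => hP
  refine le_trans (csInf_le ⟨0, ?_⟩ ⟨fun _ => P, hP', rfl⟩)
    (div_le_one_of_le₀ (BUND_le_OPT hP' hp) ((BUND_nonneg hp _).trans (BUND_le_OPT hP' hp)))
  rintro _ ⟨Q, hQ, rfl⟩
  exact div_nonneg (BUND_nonneg hp _) ((BUND_nonneg hp _).trans (BUND_le_OPT hQ hp))

lemma ratioVal_le_one {μ d : ℝ} (hne : (MeanMAD μ d).Nonempty) (m : ℕ) :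
    ratioVal (MeanMAD μ d) m ≤ 1 := by
  refine csSup_le ⟨_, 0, le_rfl, rfl⟩ ?_
  rintro _ ⟨p, hp, rfl⟩
  exact sInf_ratio_le_one hne m hp

/-- The finite-`m` guarantee of the bundle price `m (μ - d/2 - δ)`. Positivity of the guarantee
ensures `OPT > 0`. -/
lemma le_ratioVal {μ d δ : ℝ} (hμ : 0 < μ) (hne : (MeanMAD μ d).Nonempty) (hδ : 0 < δ)
    (hδ' : δ < μ - d / 2) {m : ℕ} (hm : 0 < m)
    (hpos : 0 < (μ - d / 2 - δ) / μ * (1 - (μ / 2) ^ 2 / (m * δ ^ 2))) :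
    (μ - d / 2 - δ) / μ * (1 - (μ / 2) ^ 2 / (m * δ ^ 2)) ≤ ratioVal (MeanMAD μ d) m := by
  have hm' : (0 : ℝ) < m := by exact_mod_cast hm
  have ha : 0 < μ - d / 2 - δ := by linarith
  have hp : 0 ≤ m * (μ - d / 2 - δ) := by positivity
  refine le_trans ?_ (le_csSup ⟨1, ?_⟩ ⟨m * (μ - d / 2 - δ), hp, rfl⟩)
  · obtain ⟨P₀, hP₀⟩ := hne
    refine le_csInf ⟨_, fun _ => P₀, fun _ => hP₀, rfl⟩ ?_
    rintro _ ⟨P, hP, rfl⟩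
    have hB : (μ - d / 2 - δ) / μ * (1 - (μ / 2) ^ 2 / (m * δ ^ 2)) * (m * μ) ≤
        BUND (m * (μ - d / 2 - δ)) (jointMeasure P) := by
      calc _ = m * (μ - d / 2 - δ) * (1 - (μ / 2) ^ 2 / (m * δ ^ 2)) := by field_simp
        _ ≤ _ := mul_le_mul_of_nonneg_left (sale_prob_ge hμ hδ hm hP) hp
    have hO : 0 < OPT m (jointMeasure P) :=
      (mul_pos hpos (by positivity)).trans_le (hB.trans (BUND_le_OPT hP hp))
    rw [le_div_iff₀ hO]
    exact (mul_le_mul_of_nonneg_left (OPT_le hP) hpos.le).trans hB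
  · rintro _ ⟨p, hp, rfl⟩
    exact sInf_ratio_le_one hne m hp

/-- Lemma 5: the asymptotic robust bundling ratio over the mean-MAD ambiguity set is at
least `1 - d/(2μ)`. -/
theorem ratio_lower (μ d : ℝ) (hμ : 0 < μ) (hd0 : 0 < d) (hd : d < 2 * μ) :
    1 - d / (2 * μ) ≤ liminf (fun m : ℕ => ratioVal (MeanMAD μ d) m) atTop := by
  have hne := MeanMAD.nonempty hμ hd0 hd
  refine le_of_forall_lt_imp_le_of_dense fun c hc => ?_
  have htarget : 1 - d / (2 * μ) = (μ - d / 2) / μ := by field_simp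
  have hc' : max c 0 < (μ - d / 2) / μ := by
    rw [htarget] at hc
    exact max_lt hc (div_pos (by linarith) hμ)
  set c' := max c 0
  have hcμ : c' * μ < μ - d / 2 := (lt_div_iff₀ hμ).1 hc'
  have hc'0 : 0 ≤ c' := le_max_right _ _
  -- The choice of `δ` makes `(μ - d/2 - δ)/μ` the midpoint of `c'` and `(μ - d/2)/μ`.
  set δ : ℝ := (μ - d / 2 - c' * μ) / 2 with hδ
  have hδ0 : 0 < δ := by linarith
  have hδ1 : δ < μ - d / 2 := by nlinarith
  have hcδ : c' < (μ - d / 2 - δ) / μ := by rw [lt_div_iff₀ hμ]; linarith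
  have hlim : Tendsto (fun m : ℕ => (μ - d / 2 - δ) / μ * (1 - (μ / 2) ^ 2 / (m * δ ^ 2))) atTop
      (nhds ((μ - d / 2 - δ) / μ)) := by
    have h1 : Tendsto (fun m : ℕ => (μ / 2) ^ 2 / ((m : ℝ) * δ ^ 2)) atTop (nhds 0) :=
      tendsto_const_nhds.div_atTop
        (tendsto_natCast_atTop_atTop.atTop_mul_const (by positivity))
    simpa using (h1.const_sub 1).const_mul ((μ - d / 2 - δ) / μ)
  refine (le_max_left c 0).trans (le_liminf_of_le ?_ ?_)
  · exact (isBoundedUnder_of ⟨1, ratioVal_le_one hne⟩).isCoboundedUnder_ge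
  · filter_upwards [hlim.eventually_const_lt hcδ, eventually_gt_atTop 0] with m hm hm0
    exact hm.le.trans (le_ratioVal hμ hne hδ0 hδ1 hm0 (hc'0.trans_lt hm))

end
end

section
/- Worthless prices at or above m(μ − d/2): let μ > 0, 0 < d < 2μ, m ≥ 1 an integer, and p ≥ m(μ − d/2). Then inf_{P^m ∈ P(μ,d)^m} p · P^m(∑_{i=1}^m X_i ≥ p) = 0 (and the infimum over P₂(μ,d)^m is also 0). -/
/-!
Fix a small `a > 0` and let every good have the two-point law that takes the value
`y = μ + d / (2a)` with probability `a` and `x = μ - d / (2(1-a))` with probability `1 - a`.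
These values are forced by the mean `μ` and the mean absolute deviation `d`, and `x ≥ 0` as long as
`d ≤ 2μ(1-a)`. Since `x < μ - d/2`, the bundle is worth less than `m(μ - d/2) ≤ p` whenever all
goods take their low value, so a sale requires some good to take its high value. By the union bound
this has probability at most `m * a`. The revenue is therefore at most `p * (m * a)`, which tends
to `0` with `a`.
-/

open MeasureTheory Filter Set
open scoped ENNReal

noncomputable section

/-- The law taking the value `x` with probability `1 - a` and `y` with probability `a`; it is a
probability measure when `0 ≤ a ≤ 1`. -/
def twoPt (a x y : ℝ) : Measure ℝ :=
  ENNReal.ofReal (1 - a) • Measure.dirac x + ENNReal.ofReal a • Measure.dirac y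

lemma isProbabilityMeasure_twoPt {a : ℝ} (x y : ℝ) (h0 : 0 ≤ a) (h1 : a ≤ 1) :
    IsProbabilityMeasure (twoPt a x y) := by
  constructor
  simp only [twoPt, Measure.add_apply, Measure.smul_apply, measure_univ, smul_eq_mul, mul_one]
  rw [← ENNReal.ofReal_add (by linarith) h0]
  simp

lemma integrable_twoPt (a x y : ℝ) (f : ℝ → ℝ) : Integrable f (twoPt a x y) := by
  refine Integrable.add_measure ?_ ?_ <;>
  exact (integrable_dirac (by simp)).smul_measure ENNReal.ofReal_ne_top

lemma integral_twoPt {a : ℝ} (x y : ℝ) (h0 : 0 ≤ a) (h1 : a ≤ 1) (f : ℝ → ℝ) :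
    ∫ t, f t ∂(twoPt a x y) = (1 - a) * f x + a * f y := by
  have h (c t : ℝ) : Integrable f (ENNReal.ofReal c • Measure.dirac t) :=
    (integrable_dirac (by simp)).smul_measure ENNReal.ofReal_ne_top
  rw [twoPt, integral_add_measure (h _ _) (h _ _), integral_smul_measure, integral_smul_measure,
    integral_dirac, integral_dirac, ENNReal.toReal_ofReal h0,
    ENNReal.toReal_ofReal (by linarith), smul_eq_mul, smul_eq_mul]

/-- The two-point laws of the ambiguity set that charge a point below `μ - d/2` with mass
`1 - a`. -/
lemma exists_mem_meanMAD2 {μ d a : ℝ} (hμ : 0 < μ) (hd0 : 0 < d) (ha : 0 < a)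
    (had : d ≤ 2 * μ * (1 - a)) :
    ∃ P ∈ MeanMAD2 μ d, ∃ x < μ - d / 2, (P : Measure ℝ) {x}ᶜ = ENNReal.ofReal a := by
  have ha1 : 0 < 1 - a := by
    by_contra! h
    nlinarith
  obtain ⟨x, hx⟩ : ∃ x, x = μ - d / (2 * (1 - a)) := ⟨_, rfl⟩
  obtain ⟨y, hy⟩ : ∃ y, y = μ + d / (2 * a) := ⟨_, rfl⟩
  have hx0 : 0 ≤ x := by
    rw [hx, sub_nonneg, div_le_iff₀ (by positivity)]
    linarith
  have hxlt : x < μ - d / 2 := by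
    have : d / 2 < d / (2 * (1 - a)) :=
      div_lt_div_of_pos_left hd0 (by positivity) (by linarith)
    linarith
  have hyμ : μ < y := by
    rw [hy]
    have : 0 < d / (2 * a) := by positivity
    linarith
  have hxy : x ≠ y := by linarith
  have hP := isProbabilityMeasure_twoPt x y ha.le (by linarith : a ≤ 1)
  refine ⟨⟨twoPt a x y, hP⟩, ⟨⟨?_, integrable_twoPt _ _ _ _, ?_, ?_⟩, x, y, hxy, ?_, ?_, ?_⟩, x,
    hxlt, ?_⟩
  · simp [twoPt, hx0, (by linarith : (0 : ℝ) ≤ y)]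
  · simp only [ProbabilityMeasure.coe_mk]
    rw [integral_twoPt x y ha.le (by linarith) (fun t => t), hx, hy]
    field_simp
    ring
  · simp only [ProbabilityMeasure.coe_mk]
    rw [integral_twoPt x y ha.le (by linarith) (fun t => |t - μ|), abs_of_neg (by linarith),
      abs_of_pos (by linarith), hx, hy]
    field_simp
    ring
  · simp [twoPt]
  · simp [twoPt, hxy.symm]
    linarith
  · simp [twoPt, hxy]
    linarith
  · simp [twoPt, hxy.symm]

/-- If each marginal puts all but mass `a` on a point `x`, and the bundle of `m` goods of value `x`
is worth less than `p`, then the union bound controls the revenue. -/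
lemma bund_le {m : ℕ} {p x a : ℝ} (hp : 0 ≤ p) (ha : 0 ≤ a) (hx : m * x < p)
    (P : ProbabilityMeasure ℝ) (hP : (P : Measure ℝ) {x}ᶜ = ENNReal.ofReal a) :
    BUND p (jointMeasure fun _ : Fin m => P) ≤ p * (m * a) := by
  refine mul_le_mul_of_nonneg_left ?_ hp
  refine ENNReal.toReal_le_of_le_ofReal (by positivity) ?_
  have hsub : {v : Fin m → ℝ | p ≤ ∑ i, v i} ⊆ ⋃ i, Function.eval i ⁻¹' {x}ᶜ := by
    intro v hv
    by_contra hne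
    have hall : ∀ i, v i = x := by simpa using hne
    simp [hall] at hv
    linarith
  calc jointMeasure (fun _ : Fin m => P) {v | p ≤ ∑ i, v i}
      ≤ ∑ i : Fin m, jointMeasure (fun _ : Fin m => P) (Function.eval i ⁻¹' {x}ᶜ) :=
        (measure_mono hsub).trans (measure_iUnion_fintype_le _ _)
    _ = ∑ i : Fin m, ENNReal.ofReal a := by
        refine Finset.sum_congr rfl fun i _ => ?_
        rw [← hP]
        exact (measurePreserving_eval (fun _ : Fin m => (P : Measure ℝ)) i).measure_preimage
          (measurableSet_singleton x).compl.nullMeasurableSet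
    _ = ENNReal.ofReal (m * a) := by
        rw [ENNReal.ofReal_mul (by positivity)]
        simp

lemma sInf_bund_eq_zero {μ d : ℝ} (hμ : 0 < μ) (hd0 : 0 < d) (hd : d < 2 * μ)
    {m : ℕ} (hm : 1 ≤ m) {p : ℝ} (hp : m * (μ - d / 2) ≤ p)
    {A : Set (ProbabilityMeasure ℝ)} (hA : MeanMAD2 μ d ⊆ A) :
    sInf {r | ∃ P : Fin m → ProbabilityMeasure ℝ, (∀ i, P i ∈ A) ∧
        r = BUND p (jointMeasure P)} = 0 := by
  have hm0 : (0 : ℝ) < m := by exact_mod_cast hm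
  have hp0 : 0 ≤ p := le_trans (mul_nonneg hm0.le (by linarith)) hp
  have hnn : ∀ r ∈ {r | ∃ P : Fin m → ProbabilityMeasure ℝ, (∀ i, P i ∈ A) ∧
      r = BUND p (jointMeasure P)}, 0 ≤ r := by
    rintro r ⟨P, -, rfl⟩
    exact mul_nonneg hp0 ENNReal.toReal_nonneg
  refine le_antisymm (le_of_forall_pos_le_add fun ε hε => ?_) (Real.sInf_nonneg hnn)
  -- `1 - d / (2μ)` is the largest mass `a` for which the low value is still nonnegative.
  obtain ⟨a, ha⟩ : ∃ a, a = min (1 - d / (2 * μ)) (ε / (p * m + 1)) := ⟨_, rfl⟩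
  have hpm : 0 < p * m + 1 := by positivity
  have hd1 : d / (2 * μ) < 1 := (div_lt_one (by positivity)).2 hd
  have ha0 : 0 < a := by
    rw [ha]
    exact lt_min (by linarith) (by positivity)
  have had : d ≤ 2 * μ * (1 - a) := by
    have h : d / (2 * μ) ≤ 1 - a := by
      have := ha.le.trans (min_le_left _ _)
      linarith
    rw [div_le_iff₀ (by positivity)] at h
    linarith
  have haε : a * (p * m + 1) ≤ ε := (le_div_iff₀ hpm).1 (ha.le.trans (min_le_right _ _))
  obtain ⟨P, hP, x, hx, hPx⟩ := exists_mem_meanMAD2 hμ hd0 ha0 had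
  have hb := bund_le hp0 ha0.le ((mul_lt_mul_of_pos_left hx hm0).trans_le hp) P hPx
  refine (csInf_le ⟨0, hnn⟩ ⟨fun _ => P, fun _ => hA hP, rfl⟩).trans (hb.trans ?_)
  linarith

/-- Prices at or above `m(μ - d/2)` are worthless: the worst-case bundling revenue over the
mean-MAD ambiguity set (and over its two-point subset) is zero. -/
theorem worthless_high_prices (μ d : ℝ) (hμ : 0 < μ) (hd0 : 0 < d) (hd : d < 2 * μ)
    (m : ℕ) (hm : 1 ≤ m) (p : ℝ) (hp : m * (μ - d / 2) ≤ p) :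
    sInf {r | ∃ P : Fin m → ProbabilityMeasure ℝ, (∀ i, P i ∈ MeanMAD μ d) ∧
        r = BUND p (jointMeasure P)} = 0 ∧
    sInf {r | ∃ P : Fin m → ProbabilityMeasure ℝ, (∀ i, P i ∈ MeanMAD2 μ d) ∧
        r = BUND p (jointMeasure P)} = 0 := by
  exact ⟨sInf_bund_eq_zero hμ hd0 hd hm hp fun _ h => h.1,
    sInf_bund_eq_zero hμ hd0 hd hm hp subset_rfl⟩

end
end
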